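/- Data-dependent bound: let W1, W2 be nonempty finite sets with cosine similarity S and resemblance R, and let z = √(f2/f1) + √(f1/f2). If z ≤ z* for some real z*, then S/(z* − S) ≤ R ≤ S/(2 − S). -/

import Mathlib

/-!
Let `a`, `f₁`, `f₂` be the sizes of `W₁ ∩ W₂`, `W₁`, `W₂`. Since `z = (f₁ + f₂) / √(f₁ f₂)`,
dividing the numerator and the denominator of `R = a / (f₁ + f₂ - a)` by `√(f₁ f₂)` gives
`R = S / (z - S)`. As `0 ≤ S ≤ 1 < 2 ≤ z`, both bounds follow because `u ↦ S / (u - S)` is antitone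
on `(S, ∞)`.
-/

open Finset

section Real

variable {x y : ℝ}

lemma sqrt_div_add_sqrt_div (hx : 0 < x) (hy : 0 < y) :
    √(y / x) + √(x / y) = (x + y) / √(x * y) := by
  rw [Real.sqrt_div hy.le, Real.sqrt_div hx.le, Real.sqrt_mul hx.le,
    div_add_div _ _ (Real.sqrt_pos.2 hx).ne' (Real.sqrt_pos.2 hy).ne',
    Real.mul_self_sqrt hx.le, Real.mul_self_sqrt hy.le, add_comm y x]

lemma two_le_sqrt_div_add_sqrt_div (hx : 0 < x) (hy : 0 < y) : 2 ≤ √(y / x) + √(x / y) := by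
  have mul_eq_one : √(y / x) * √(x / y) = 1 := by
    rw [← Real.sqrt_mul (by positivity), div_mul_div_cancel₀ hx.ne', div_self hy.ne',
      Real.sqrt_one]
  have am_gm : 2 * 1 ≤ √(y / x) + √(x / y) :=
    two_mul_le_add_of_sq_le_mul (Real.sqrt_nonneg _) (Real.sqrt_nonneg _)
      ((one_pow 2).trans_le mul_eq_one.ge)
  rwa [mul_one] at am_gm

end Real

lemma antitoneOn_div_sub {K : Type*} [Field K] [LinearOrder K] [IsStrictOrderedRing K] {c : K}
    (hc : 0 ≤ c) (d : K) : AntitoneOn (fun u ↦ c / (u - d)) (Set.Ioi d) :=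
  fun _ hu _ _ huv ↦ div_le_div_of_nonneg_left hc (sub_pos.2 hu) (sub_le_sub_right huv d)

section Similarity

variable {α : Type*} [DecidableEq α]

/-- The cosine similarity `S` of two finite sets, that is, the cosine of the angle between their
indicator vectors; it is `0` when one of the sets is empty. -/
noncomputable def cosineSimilarity (s t : Finset α) : ℝ :=
  #(s ∩ t) / √(#s * #t)

/-- The resemblance `R` (Jaccard index) of two finite sets; it is `0` when both are empty. -/
noncomputable def resemblance (s t : Finset α) : ℝ :=
  #(s ∩ t) / #(s ∪ t)

lemma cosineSimilarity_nonneg (s t : Finset α) : 0 ≤ cosineSimilarity s t := by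
  unfold cosineSimilarity
  positivity

lemma cosineSimilarity_le_one (s t : Finset α) : cosineSimilarity s t ≤ 1 := by
  have card_inter_le : (#(s ∩ t) : ℝ) ≤ √(#s * #t) := by
    apply Real.le_sqrt_of_sq_le
    rw [sq]
    gcongr
    · exact inter_subset_left
    · exact inter_subset_right
  exact div_le_one_of_le₀ card_inter_le (Real.sqrt_nonneg _)

variable {s t : Finset α}

lemma resemblance_eq_cosineSimilarity_div (hs : s.Nonempty) (ht : t.Nonempty) :
    resemblance s t =
      cosineSimilarity s t / (√(#t / #s) + √(#s / #t) - cosineSimilarity s t) := by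
  have hs₀ : (0 : ℝ) < #s := by exact_mod_cast hs.card_pos
  have ht₀ : (0 : ℝ) < #t := by exact_mod_cast ht.card_pos
  rw [resemblance, cosineSimilarity, sqrt_div_add_sqrt_div hs₀ ht₀, ← sub_div,
    div_div_div_cancel_right₀ (Real.sqrt_pos.2 (mul_pos hs₀ ht₀)).ne', cast_card_union]

theorem minhash_data_dependent_bound_general (hs : s.Nonempty) (ht : t.Nonempty) {zstar : ℝ}
    (hz : √(#t / #s) + √(#s / #t) ≤ zstar) :
    cosineSimilarity s t / (zstar - cosineSimilarity s t) ≤ resemblance s t ∧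
      resemblance s t ≤ cosineSimilarity s t / (2 - cosineSimilarity s t) := by
  have two_le_z : 2 ≤ √(#t / #s : ℝ) + √(#s / #t) :=
    two_le_sqrt_div_add_sqrt_div (by exact_mod_cast hs.card_pos) (by exact_mod_cast ht.card_pos)
  have lt_two : cosineSimilarity s t < 2 := (cosineSimilarity_le_one s t).trans_lt one_lt_two
  have lt_z : cosineSimilarity s t < √(#t / #s) + √(#s / #t) := lt_two.trans_le two_le_z
  have antitone := antitoneOn_div_sub (cosineSimilarity_nonneg s t) (cosineSimilarity s t)
  rw [resemblance_eq_cosineSimilarity_div hs ht]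
  exact ⟨antitone lt_z (lt_z.trans_le hz) hz, antitone lt_two lt_z two_le_z⟩

end Similarity

/-- Data-dependent bound: if `z = √(f2/f1) + √(f1/f2) ≤ z*` with `z* ≥ 2`, then
`S/(z* - S) ≤ R ≤ S/(2 - S)`. -/
theorem minhash_data_dependent_bound (W1 W2 : Finset ℕ) (h1 : W1.Nonempty) (h2 : W2.Nonempty)
    (zstar : ℝ) (hzstar : 2 ≤ zstar)
    (hz : Real.sqrt ((W2.card : ℝ) / (W1.card : ℝ)) +
        Real.sqrt ((W1.card : ℝ) / (W2.card : ℝ)) ≤ zstar) :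
    (((W1 ∩ W2).card : ℝ) / Real.sqrt ((W1.card : ℝ) * (W2.card : ℝ))) /
        (zstar - ((W1 ∩ W2).card : ℝ) / Real.sqrt ((W1.card : ℝ) * (W2.card : ℝ))) ≤
      ((W1 ∩ W2).card : ℝ) / ((W1 ∪ W2).card : ℝ) ∧
    ((W1 ∩ W2).card : ℝ) / ((W1 ∪ W2).card : ℝ) ≤
      (((W1 ∩ W2).card : ℝ) / Real.sqrt ((W1.card : ℝ) * (W2.card : ℝ))) /
        (2 - ((W1 ∩ W2).card : ℝ) / Real.sqrt ((W1.card : ℝ) * (W2.card : ℝ))) :=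
  minhash_data_dependent_bound_general h1 h2 hz
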